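/- For every positive integer n, the polynomial N_n(t) := N_{nn}(t) is palindromic with total degree n: its coefficient of t^0 vanishes, its coefficient of t^k vanishes for all k ≥ n, and for all 1 ≤ k ≤ n−1 the coefficient of t^k equals the coefficient of t^{n−k}. (Corollary 3.2.) -/

import Mathlib

open Finset

/-- The polynomial `W_{pq}(t) = Σ_{k=0}^{min(p,q)-1} C(p-1,k) C(q-1,k) t^k`. -/
noncomputable def W (p q : ℕ) : Polynomial ℤ :=
  ∑ k ∈ Finset.range (min p q),
    Polynomial.C (((p - 1).choose k : ℤ) * ((q - 1).choose k : ℤ)) * Polynomial.X ^ k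

/-!
The coefficient of `t^m` in `N_{pq}` is the sum of the earth mover's distances between all pairs
of `m`-element subsets `A ⊆ {0, …, p - 1}` and `B ⊆ {0, …, q - 1}`. Indeed, splitting the
pairs in `{0, …, p}` and `{0, …, q}` according to whether `p ∈ A` and `q ∈ B` gives the recursion
of `N`: adjoining maximal elements `p` and `q` to `A` and `B` raises their distance by exactly
`|p - q|`. For `p = q = n` the distance vanishes when `m = 0` or `m ≥ n`, since then `A = B`, and
taking complements in `{0, …, n - 1}` preserves the distance while exchanging `m` with `n - m`.
-/

section PowersetCard

variable {α M : Type*} [DecidableEq α] [AddCommMonoid M]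

theorem sum_powersetCard_insert {a : α} {s : Finset α} (ha : a ∉ s) (m : ℕ) (f : Finset α → M) :
    ∑ A ∈ powersetCard (m + 1) (insert a s), f A =
      ∑ A ∈ powersetCard (m + 1) s, f A + ∑ A ∈ powersetCard m s, f (insert a A) := by
  have notMem_of_mem {k : ℕ} {A : Finset α} (hA : A ∈ powersetCard k s) : a ∉ A :=
    fun haA ↦ ha ((mem_powersetCard.1 hA).1 haA)
  have hdisj : Disjoint (powersetCard (m + 1) s) ((powersetCard m s).image (insert a)) := by
    refine disjoint_right.2 fun A hA hA' ↦ notMem_of_mem hA' ?_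
    obtain ⟨B, -, rfl⟩ := mem_image.1 hA
    exact mem_insert_self a B
  rw [powersetCard_succ_insert ha, sum_union hdisj, sum_image]
  exact insert_erase_invOn.2.injOn.mono fun A hA ↦ notMem_of_mem hA

theorem sum_powersetCard_sdiff {s : Finset α} {m : ℕ} (hm : m ≤ #s) (f : Finset α → M) :
    ∑ A ∈ powersetCard m s, f (s \ A) = ∑ A ∈ powersetCard (#s - m) s, f A := by
  have sdiff_mem {k : ℕ} {A : Finset α} (hA : A ∈ powersetCard k s) :
      s \ A ∈ powersetCard (#s - k) s := by
    obtain ⟨hAs, hcard⟩ := mem_powersetCard.1 hA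
    exact mem_powersetCard.2 ⟨sdiff_subset, by rw [card_sdiff_of_subset hAs, hcard]⟩
  refine sum_nbij' (s \ ·) (s \ ·) (fun _ ↦ sdiff_mem) (fun A hA ↦ ?_)
    (fun A hA ↦ Finset.sdiff_sdiff_eq_self (mem_powersetCard.1 hA).1)
    (fun A hA ↦ Finset.sdiff_sdiff_eq_self (mem_powersetCard.1 hA).1) fun _ _ ↦ rfl
  simpa only [Nat.sub_sub_self hm] using sdiff_mem hA

end PowersetCard

/-- The counting function of `A`: the number of its elements that are at most `j`. It is
integer-valued because only differences of counting functions are used. -/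
def countLE (A : Finset ℕ) (j : ℕ) : ℤ := #{a ∈ A | a ≤ j}

theorem countLE_le_card (A : Finset ℕ) (j : ℕ) : countLE A j ≤ #A :=
  Nat.cast_le.2 (card_filter_le A (· ≤ j))

theorem countLE_eq_card {A : Finset ℕ} {j : ℕ} (h : ∀ a ∈ A, a ≤ j) : countLE A j = #A := by
  rw [countLE, filter_true_of_mem h]

theorem countLE_singleton (p j : ℕ) : countLE {p} j = if p ≤ j then 1 else 0 := by
  rw [countLE, filter_singleton, apply_ite card, card_singleton, card_empty]
  norm_cast

theorem countLE_union {A B : Finset ℕ} (h : Disjoint A B) (j : ℕ) :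
    countLE (A ∪ B) j = countLE A j + countLE B j := by
  simp only [countLE, filter_union, card_union_of_disjoint (disjoint_filter_filter h),
    Nat.cast_add]

theorem countLE_insert {A : Finset ℕ} {p : ℕ} (hp : p ∉ A) (j : ℕ) :
    countLE (insert p A) j = countLE A j + countLE {p} j := by
  rw [insert_eq, countLE_union (disjoint_singleton_left.2 hp), add_comm]

theorem countLE_sdiff {A S : Finset ℕ} (hAS : A ⊆ S) (j : ℕ) :
    countLE (S \ A) j = countLE S j - countLE A j := by
  rw [eq_sub_iff_add_eq, ← countLE_union sdiff_disjoint, sdiff_union_of_subset hAS]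

theorem abs_countLE_insert_sub {A B : Finset ℕ} {p q : ℕ} (hA : ∀ a ∈ A, a < p)
    (hB : ∀ b ∈ B, b < q) (hcard : #A = #B) (j : ℕ) :
    |countLE (insert p A) j - countLE (insert q B) j| =
      |countLE A j - countLE B j| + |countLE {p} j - countLE {q} j| := by
  have hAj : countLE A j ≤ #B := hcard ▸ countLE_le_card A j
  have hBj : countLE B j ≤ #A := hcard ▸ countLE_le_card B j
  have hA_full (h : p ≤ j) : countLE A j = #A :=
    countLE_eq_card fun a ha ↦ (hA a ha).le.trans h
  have hB_full (h : q ≤ j) : countLE B j = #B :=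
    countLE_eq_card fun b hb ↦ (hB b hb).le.trans h
  -- When `p ≤ j < q`, all of `A` is counted, so both differences are nonnegative; similarly
  -- both are nonpositive when `q ≤ j < p`, and otherwise the second one vanishes.
  rw [countLE_insert fun hp ↦ (hA p hp).false, countLE_insert fun hq ↦ (hB q hq).false,
    add_sub_add_comm, abs_add_eq_add_abs_iff, countLE_singleton, countLE_singleton]
  grind

/-- The earth mover's distance between finite sets of equal cardinality: the least cost of moving
the points of `A` onto those of `B` along the line, computed as the `L¹` distance of the counting
functions. If the cardinalities differ, the sum has infinite support and takes the junk value `0`.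
-/
noncomputable def earthMoverDist (A B : Finset ℕ) : ℤ := ∑ᶠ j, |countLE A j - countLE B j|

theorem support_countLE_sub_finite {A B : Finset ℕ} (hcard : #A = #B) :
    (Function.support fun j ↦ |countLE A j - countLE B j|).Finite := by
  obtain ⟨N, hN⟩ := (A ∪ B).bddAbove
  refine (Set.finite_Iio N).subset fun j hj ↦ Set.mem_Iio.2 (not_le.1 fun hNj ↦ hj ?_)
  have le_j {a : ℕ} (ha : a ∈ A ∪ B) : a ≤ j := (hN ha).trans hNj
  simp only [countLE_eq_card fun _ ha ↦ le_j (mem_union_left B ha),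
    countLE_eq_card fun _ hb ↦ le_j (mem_union_right A hb), hcard, sub_self, abs_zero]

theorem earthMoverDist_self (A : Finset ℕ) : earthMoverDist A A = 0 := by
  simp only [earthMoverDist, sub_self, abs_zero, finsum_zero]

theorem earthMoverDist_comm (A B : Finset ℕ) : earthMoverDist A B = earthMoverDist B A :=
  finsum_congr fun _ ↦ abs_sub_comm _ _

theorem earthMoverDist_singleton (p q : ℕ) : earthMoverDist {p} {q} = |(p : ℤ) - q| := by
  wlog hpq : p ≤ q generalizing p q
  · rw [earthMoverDist_comm, abs_sub_comm, this q p (le_of_not_ge hpq)]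
  have hind (j : ℕ) : |countLE {p} j - countLE {q} j| = if j ∈ Ico p q then 1 else 0 := by
    grind [countLE_singleton]
  have hsupp : (Function.support fun j ↦ |countLE {p} j - countLE {q} j|) ⊆ Ico p q := by
    intro j hj
    by_contra hmem
    exact hj ((hind j).trans (if_neg hmem))
  calc
    earthMoverDist {p} {q} = ∑ j ∈ Ico p q, |countLE {p} j - countLE {q} j| :=
      finsum_eq_sum_of_support_subset _ hsupp
    _ = ∑ j ∈ Ico p q, 1 := sum_congr rfl fun j hj ↦ (hind j).trans (if_pos hj)
    _ = (q : ℤ) - p := by rw [sum_const, Nat.card_Ico, nsmul_one, Nat.cast_sub hpq]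
    _ = |(p : ℤ) - q| := by rw [abs_of_nonpos (by lia), neg_sub]

theorem earthMoverDist_insert {A B : Finset ℕ} {p q : ℕ} (hA : ∀ a ∈ A, a < p)
    (hB : ∀ b ∈ B, b < q) (hcard : #A = #B) :
    earthMoverDist (insert p A) (insert q B) = earthMoverDist A B + |(p : ℤ) - q| := by
  rw [← earthMoverDist_singleton]
  simp only [earthMoverDist, abs_countLE_insert_sub hA hB hcard]
  exact finsum_add_distrib (support_countLE_sub_finite hcard) (support_countLE_sub_finite rfl)

theorem earthMoverDist_sdiff {A B S : Finset ℕ} (hA : A ⊆ S) (hB : B ⊆ S) :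
    earthMoverDist (S \ A) (S \ B) = earthMoverDist A B := by
  refine finsum_congr fun j ↦ ?_
  rw [countLE_sdiff hA, countLE_sdiff hB, sub_sub_sub_cancel_left, abs_sub_comm]

/-- The sum of the earth mover's distances between the `m`-element subsets of `{0, …, p - 1}` and
those of `{0, …, q - 1}`, the combinatorial meaning of the coefficient of `t^m` in `N_{pq}`. -/
noncomputable def totalDist (p q m : ℕ) : ℤ :=
  ∑ A ∈ powersetCard m (range p), ∑ B ∈ powersetCard m (range q), earthMoverDist A B

theorem totalDist_eq_zero {p q m : ℕ}
    (h : ∀ A ∈ powersetCard m (range p), ∀ B ∈ powersetCard m (range q), A = B) :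
    totalDist p q m = 0 :=
  sum_eq_zero fun A hA ↦ sum_eq_zero fun B hB ↦ h A hA B hB ▸ earthMoverDist_self A

theorem totalDist_zero (p q : ℕ) : totalDist p q 0 = 0 := by
  simp only [totalDist, powersetCard_zero, sum_singleton, earthMoverDist_self]

theorem totalDist_zero_left (q m : ℕ) : totalDist 0 q m = 0 := by
  refine totalDist_eq_zero fun A hA B hB ↦ ?_
  obtain rfl : A = ∅ := subset_empty.1 (mem_powersetCard.1 hA).1
  obtain rfl : m = 0 := (mem_powersetCard.1 hA).2.symm
  exact (card_eq_zero.1 (mem_powersetCard.1 hB).2).symm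

theorem totalDist_comm (p q m : ℕ) : totalDist p q m = totalDist q p m := by
  rw [totalDist, sum_comm]
  simp only [totalDist, earthMoverDist_comm]

theorem totalDist_self_of_le {n m : ℕ} (hnm : n ≤ m) : totalDist n n m = 0 := by
  have eq_range {A : Finset ℕ} (hA : A ∈ powersetCard m (range n)) : A = range n := by
    obtain ⟨hsub, hcard⟩ := mem_powersetCard.1 hA
    exact eq_of_subset_of_card_le hsub (by rwa [card_range, hcard])
  exact totalDist_eq_zero fun A hA B hB ↦ (eq_range hA).trans (eq_range hB).symm

theorem totalDist_self_sub {n m : ℕ} (hm : m ≤ n) : totalDist n n (n - m) = totalDist n n m := by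
  have sum_compl (f : Finset ℕ → ℤ) : ∑ A ∈ powersetCard (n - m) (range n), f A =
      ∑ A ∈ powersetCard m (range n), f (range n \ A) := by
    rw [sum_powersetCard_sdiff (by rwa [card_range]), card_range]
  simp only [totalDist, sum_compl]
  exact sum_congr rfl fun A hA ↦ sum_congr rfl fun B hB ↦
    earthMoverDist_sdiff (mem_powersetCard.1 hA).1 (mem_powersetCard.1 hB).1

theorem sum_earthMoverDist_insert (p q m : ℕ) :
    ∑ A ∈ powersetCard m (range p), ∑ B ∈ powersetCard m (range q),
        earthMoverDist (insert p A) (insert q B) =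
      totalDist p q m + |(p : ℤ) - q| * (p.choose m * q.choose m) := by
  have hdist (A) (hA : A ∈ powersetCard m (range p)) (B) (hB : B ∈ powersetCard m (range q)) :
      earthMoverDist (insert p A) (insert q B) = earthMoverDist A B + |(p : ℤ) - q| := by
    obtain ⟨hAp, hAm⟩ := mem_powersetCard.1 hA
    obtain ⟨hBq, hBm⟩ := mem_powersetCard.1 hB
    exact earthMoverDist_insert (fun a ha ↦ mem_range.1 (hAp ha))
      (fun b hb ↦ mem_range.1 (hBq hb)) (hAm.trans hBm.symm)
  rw [sum_congr rfl fun A hA ↦ sum_congr rfl (hdist A hA)]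
  simp only [sum_add_distrib, sum_const, card_powersetCard, card_range, nsmul_eq_mul, totalDist]
  ring

theorem totalDist_succ_succ (p q m : ℕ) :
    totalDist (p + 1) (q + 1) (m + 1) =
      totalDist p (q + 1) (m + 1) + totalDist (p + 1) q (m + 1) - totalDist p q (m + 1) +
        totalDist p q m + |(p : ℤ) - q| * (p.choose m * q.choose m) := by
  have hinsert := sum_earthMoverDist_insert p q m
  simp only [totalDist, range_add_one, sum_powersetCard_insert notMem_range_self,
    sum_add_distrib] at hinsert ⊢
  linarith

theorem coeff_W_succ_succ (p q m : ℕ) :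
    (W (p + 1) (q + 1)).coeff m = p.choose m * q.choose m := by
  simp only [W, Polynomial.finsetSum_coeff, Polynomial.coeff_C_mul_X_pow, Nat.add_sub_cancel,
    sum_ite_eq, mem_range, ite_eq_left_iff, not_lt]
  intro hm
  obtain hp | hq : p < m ∨ q < m := by lia
  · rw [Nat.choose_eq_zero_of_lt hp, Nat.cast_zero, zero_mul]
  · rw [Nat.choose_eq_zero_of_lt hq, Nat.cast_zero, mul_zero]

theorem coeff_eq_totalDist {N : ℕ → ℕ → Polynomial ℤ} (h0q : ∀ q, N 0 q = 0)
    (hp0 : ∀ p, N p 0 = 0)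
    (hrec : ∀ p q : ℕ, N (p + 1) (q + 1) = N p (q + 1) + N (p + 1) q
      - (1 - Polynomial.X) * N p q
        + Polynomial.C |(p : ℤ) - q| * Polynomial.X * W (p + 1) (q + 1))
    (p q m : ℕ) : (N p q).coeff m = totalDist p q m := by
  induction p generalizing q m with
  | zero => rw [h0q, totalDist_zero_left, Polynomial.coeff_zero]
  | succ p ihp =>
    induction q generalizing m with
    | zero => rw [hp0, totalDist_comm, totalDist_zero_left, Polynomial.coeff_zero]
    | succ q ihq =>
      rw [hrec, sub_mul, one_mul, mul_assoc]
      cases m with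
      | zero =>
        simp only [Polynomial.coeff_add, Polynomial.coeff_sub, Polynomial.coeff_C_mul,
          Polynomial.coeff_X_mul_zero, ihp, ihq, totalDist_zero, add_zero, sub_zero, mul_zero]
      | succ m =>
        simp only [Polynomial.coeff_add, Polynomial.coeff_sub, Polynomial.coeff_C_mul,
          Polynomial.coeff_X_mul, coeff_W_succ_succ, ihp, ihq, totalDist_succ_succ]
        ring

/-- Corollary 3.2: for every positive integer `n`, the polynomial `N_n(t) = N_{nn}(t)`
is palindromic with total degree `n`: its constant coefficient vanishes, its coefficients
in degrees `≥ n` vanish, and the coefficient of `t^k` equals that of `t^(n-k)` for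
`1 ≤ k ≤ n-1`. -/
theorem Nn_palindromic (N : ℕ → ℕ → Polynomial ℤ)
    (h0q : ∀ q, N 0 q = 0) (hp0 : ∀ p, N p 0 = 0) (h11 : N 1 1 = 0)
    (hrec : ∀ p q : ℕ, 1 ≤ p → 1 ≤ q → ¬(p = 1 ∧ q = 1) →
      N p q = N (p - 1) q + N p (q - 1) - (1 - Polynomial.X) * N (p - 1) (q - 1)
        + Polynomial.C (|(p : ℤ) - (q : ℤ)|) * Polynomial.X * W p q)
    (n : ℕ) (hn : 1 ≤ n) :
    (N n n).coeff 0 = 0 ∧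
    (∀ k : ℕ, n ≤ k → (N n n).coeff k = 0) ∧
    (∀ k : ℕ, 1 ≤ k → k ≤ n - 1 → (N n n).coeff k = (N n n).coeff (n - k)) := by
  have hrec_succ (p q : ℕ) : N (p + 1) (q + 1) = N p (q + 1) + N (p + 1) q
      - (1 - Polynomial.X) * N p q
        + Polynomial.C |(p : ℤ) - q| * Polynomial.X * W (p + 1) (q + 1) := by
    by_cases h : p = 0 ∧ q = 0
    · obtain ⟨rfl, rfl⟩ := h
      simp [h0q, hp0, h11]
    · simpa using hrec (p + 1) (q + 1) (by lia) (by lia) (by lia)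
  simp only [coeff_eq_totalDist h0q hp0 hrec_succ]
  exact ⟨totalDist_zero n n, fun k hk ↦ totalDist_self_of_le hk,
    fun k _ hk ↦ (totalDist_self_sub (by lia)).symm⟩
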